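/- Let Q be a quiver with a set ρ of monomial relations, over which cyclic words exist. If w is a cyclic word of minimal length, then every arrow of Q occurs at most once as a direct letter of w and at most once as an inverse letter of w; in particular the length of w is at most 2a, where a is the number of arrows of Q. -/

import Mathlib

/-! We model a quiver by a type `V` of vertices, a finite type `A` of arrows
and source/target maps `src tgt : A → V`.  A letter is an arrow (direct
letter, `Sum.inl`) or a formal inverse of an arrow (inverse letter,
`Sum.inr`); the formal inverse of a letter is given by `Sum.swap`.  A set `ρ`
of monomial relations is a set of composable arrow paths of length at
least 2. -/

/-- Source of a letter. -/
def lsrc {V A : Type*} (src tgt : A → V) : A ⊕ A → V := fun l => l.elim src tgt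

/-- Target of a letter. -/
def ltgt {V A : Type*} (src tgt : A → V) : A ⊕ A → V := fun l => l.elim tgt src

/-- The inverse of a word: reverse the list and invert each letter. -/
def winv {A : Type*} (w : List (A ⊕ A)) : List (A ⊕ A) := (w.map Sum.swap).reverse

/-- `w` is a word: consecutive letters are composable, (W1) no letter is
immediately followed by its inverse, and (W2) no subword of `w` or of `w⁻¹`
belongs to the set `ρ` of monomial relations. -/
def IsWord {V A : Type*} (src tgt : A → V) (ρ : Set (List A))
    (w : List (A ⊕ A)) : Prop :=
  List.Chain' (fun l l' => ltgt src tgt l = lsrc src tgt l') w ∧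
  List.Chain' (fun l l' => Sum.swap l ≠ l') w ∧
  (∀ p ∈ ρ, ¬ (p.map Sum.inl) <:+: w) ∧
  (∀ p ∈ ρ, ¬ (p.map Sum.inl) <:+: winv w)

/-- `w` is a cyclic word: it contains both a direct and an inverse letter,
and `w ++ w` is again a word. -/
def IsCyclicWord {V A : Type*} (src tgt : A → V) (ρ : Set (List A))
    (w : List (A ⊕ A)) : Prop :=
  (∃ l ∈ w, l.isLeft = true) ∧ (∃ l ∈ w, l.isRight = true) ∧
  IsWord src tgt ρ (w ++ w)

structure GoodSeq {V A : Type*} (src tgt : A → V) (ρ : Set (List A))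
    (N : ℤ) (g : ℤ → A ⊕ A) : Prop where
  pos : 0 < N
  per : ∀ k, g (k + N) = g k
  dir : ∃ k, (g k).isLeft = true
  inv : ∃ k, (g k).isRight = true
  comp : ∀ k, ltgt src tgt (g k) = lsrc src tgt (g (k + 1))
  red : ∀ k, Sum.swap (g k) ≠ g (k + 1)
  rel : ∀ p ∈ ρ, ∀ t : ℤ, ¬ ∀ (k : ℕ) (h : k < p.length), g (t + k) = Sum.inl p[k]
  rel' : ∀ p ∈ ρ, ∀ t : ℤ, ¬ ∀ (k : ℕ) (h : k < p.length), g (t - k) = Sum.inr p[k]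

/-- Periodization. -/
def perz {B : Type*} (P : ℤ) (h : ℤ → B) : ℤ → B := fun k => h (k % P)

theorem perz_eq {B : Type*} (P : ℤ) (h : ℤ → B) (k : ℤ) (h0 : 0 ≤ k) (h1 : k < P) :
    perz P h k = h k := by
  unfold perz; rw [Int.emod_eq_of_lt h0 h1]

theorem perz_add {B : Type*} (P : ℤ) (h : ℤ → B) (k : ℤ) :
    perz P h (k + P) = perz P h k := by
  unfold perz; rw [Int.add_emod_right]

theorem perz_eq2 {B : Type*} (P : ℤ) (h : ℤ → B) (k : ℤ) (h0 : P ≤ k) (h1 : k < 2 * P) :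
    perz P h k = h (k - P) := by
  have := perz_add P h (k - P)
  rw [sub_add_cancel] at this
  rw [this, perz_eq] <;> omega

theorem perz_mod {B : Type*} (P : ℤ) (h : ℤ → B) (t k : ℤ) :
    perz P h (t % P + k) = perz P h (t + k) := by
  unfold perz; rw [Int.emod_add_emod]

theorem perz_succ {B : Type*} (P : ℤ) (h : ℤ → B) (hP : 0 < P) (k : ℤ) :
    (0 ≤ k % P ∧ k % P + 1 < P ∧ perz P h (k + 1) = h (k % P + 1)) ∨
    (k % P = P - 1 ∧ perz P h (k + 1) = h 0) := by
  have h0 := Int.emod_nonneg k hP.ne'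
  have h1 := Int.emod_lt_of_pos k hP
  by_cases hk : k % P + 1 < P
  · left
    refine ⟨h0, hk, ?_⟩
    rw [← perz_mod, perz_eq] <;> omega
  · right
    have : k % P = P - 1 := by omega
    refine ⟨this, ?_⟩
    rw [← perz_mod, this, perz_eq2] <;> first | omega | (congr 1; omega)

theorem perz_good {V A : Type*} {src tgt : A → V} {ρ : Set (List A)}
    {P : ℤ} {h : ℤ → A ⊕ A} (hP : 0 < P)
    (dir : ∃ k, 0 ≤ k ∧ k < P ∧ (h k).isLeft = true)
    (inv : ∃ k, 0 ≤ k ∧ k < P ∧ (h k).isRight = true)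
    (comp : ∀ k, 0 ≤ k → k + 1 < P → ltgt src tgt (h k) = lsrc src tgt (h (k + 1)))
    (compj : ltgt src tgt (h (P - 1)) = lsrc src tgt (h 0))
    (red : ∀ k, 0 ≤ k → k + 1 < P → Sum.swap (h k) ≠ h (k + 1))
    (redj : Sum.swap (h (P - 1)) ≠ h 0)
    (rel : ∀ p ∈ ρ, ∀ t : ℤ, 0 ≤ t → t < P →
      ¬ ∀ (k : ℕ) (_ : k < p.length), perz P h (t + k) = Sum.inl p[k])
    (rel' : ∀ p ∈ ρ, ∀ t : ℤ, 0 ≤ t → t < P →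
      ¬ ∀ (k : ℕ) (_ : k < p.length), perz P h (t - k) = Sum.inr p[k]) :
    GoodSeq src tgt ρ P (perz P h) where
  pos := hP
  per := perz_add P h
  dir := by
    obtain ⟨k, h0, h1, h2⟩ := dir
    exact ⟨k, by rwa [perz_eq _ _ _ h0 h1]⟩
  inv := by
    obtain ⟨k, h0, h1, h2⟩ := inv
    exact ⟨k, by rwa [perz_eq _ _ _ h0 h1]⟩
  comp := by
    intro k
    rcases perz_succ P h hP k with ⟨h0, h1, h2⟩ | ⟨h0, h2⟩
    · rw [h2]; exact comp _ h0 h1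
    · rw [h2, ← compj, ← h0]; rfl
  red := by
    intro k
    rcases perz_succ P h hP k with ⟨h0, h1, h2⟩ | ⟨h0, h2⟩
    · rw [h2]; exact red _ h0 h1
    · rw [h2]; unfold perz; rw [h0]; exact redj
  rel := by
    intro p hp t H
    refine rel p hp (t % P) (Int.emod_nonneg t hP.ne') (Int.emod_lt_of_pos t hP) ?_
    intro k hk
    rw [perz_mod]; exact H k hk
  rel' := by
    intro p hp t H
    refine rel' p hp (t % P) (Int.emod_nonneg t hP.ne') (Int.emod_lt_of_pos t hP) ?_
    intro k hk
    rw [sub_eq_add_neg, perz_mod, ← sub_eq_add_neg]; exact H k hk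

theorem not_both {A : Type*} {x : A ⊕ A} (h : x.isLeft = true) (h' : x.isRight = true) : False := by
  cases x <;> simp_all

/-- Splicing lemma. -/
theorem splice_good {V A : Type*} {src tgt : A → V} {ρ : Set (List A)}
    {N : ℤ} {g : ℤ → A ⊕ A} (G : GoodSeq src tgt ρ N g) {i j : ℤ} (hij : i < j)
    (hd : (g i).isLeft = true) (he : g i = g j)
    (hc : (∃ c : ℤ, 0 ≤ c ∧ (g (i + c)).isRight = true ∧
            ∀ k, 0 ≤ k → k < c → g (i + k) = g (j + k) ∧ (g (i + k)).isLeft = true) ∨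
          (∃ d : ℤ, 0 ≤ d ∧ (g (j - d)).isRight = true ∧
            ∀ k, 0 ≤ k → k < d → g (i - k) = g (j - k) ∧ (g (i - k)).isLeft = true)) :
    GoodSeq src tgt ρ (j - i) (perz (j - i) (fun k => g (i + k))) := by
  have hq : ∃ q, 0 ≤ q ∧ q < j - i ∧ (g (i + q)).isRight = true := by
    rcases hc with ⟨c, hc0, hc1, hc2⟩ | ⟨d, hc0, hc1, hc2⟩
    · refine ⟨c, hc0, ?_, hc1⟩
      by_contra hcon
      obtain ⟨h1, h2⟩ := hc2 (c - (j - i)) (by omega) (by omega)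
      rw [h1, show j + (c - (j - i)) = i + c by ring] at h2
      exact not_both h2 hc1
    · have hd0 : d ≠ 0 := by
        rintro rfl
        rw [sub_zero, ← he] at hc1
        exact not_both hd hc1
      have : d < j - i ∨ d = j - i ∨ j - i < d := by omega
      refine ⟨j - i - d, ?_, by omega, by rw [show i + (j - i - d) = j - d by ring]; exact hc1⟩
      by_contra hcon
      obtain ⟨h1, h2⟩ := hc2 (d - (j - i)) (by omega) (by omega)
      rw [show i - (d - (j - i)) = j - d by ring] at h2
      exact not_both h2 hc1
  refine perz_good (by omega) ⟨0, le_refl _, by omega, by simpa using hd⟩ hq ?_ ?_ ?_ ?_ ?_ ?_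
  · intro k _ _
    have := G.comp (i + k)
    rwa [add_assoc] at this
  · have := G.comp (j - 1)
    rw [sub_add_cancel, ← he] at this
    simp only [add_zero]
    rw [show i + (j - i - 1) = j - 1 by ring, this]
  · intro k _ _
    have := G.red (i + k)
    rwa [add_assoc] at this
  · have := G.red (j - 1)
    rw [sub_add_cancel, ← he] at this
    simp only [add_zero]
    rw [show i + (j - i - 1) = j - 1 by ring]
    exact this
  · intro p hp t ht0 ht1 H
    -- no inverse letter is matched
    have HL : ∀ r : ℤ, t ≤ r → r < t + p.length →
        (perz (j - i) (fun k => g (i + k)) r).isLeft = true := by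
      intro r h0 h1
      have := H (r - t).toNat (by omega)
      rw [show t + ((r - t).toNat : ℤ) = r by omega] at this
      rw [this]; rfl
    by_cases hL : t + p.length ≤ j - i
    · apply G.rel p hp (i + t)
      intro k hk
      rw [← H k hk, perz_eq _ _ _ (by omega) (by omega), add_assoc]
    · rcases hc with ⟨c, hc0, hc1, hc2⟩ | ⟨d, hc0, hc1, hc2⟩
      · have hcn : c < j - i := by
          by_contra hcon
          obtain ⟨h1, h2⟩ := hc2 (c - (j - i)) (by omega) (by omega)
          rw [h1, show j + (c - (j - i)) = i + c by ring] at h2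
          exact not_both h2 hc1
        have hb : t + p.length ≤ j - i + c := by
          by_contra hcon
          have := HL (j - i + c) (by omega) (by omega)
          rw [perz_eq2 _ _ _ (by omega) (by omega)] at this
          rw [show i + (j - i + c - (j - i)) = i + c by ring] at this
          exact not_both this hc1
        apply G.rel p hp (i + t)
        intro k hk
        rw [← H k hk]
        by_cases hr : t + k < j - i
        · rw [perz_eq _ _ _ (by omega) (by omega), add_assoc]
        · rw [perz_eq2 _ _ _ (by omega) (by omega), (hc2 (t + k - (j - i)) (by omega) (by omega)).1]
          congr 1; ring
      · obtain ⟨q, hq0, hq1, hq2⟩ := hq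
        have hb : t + p.length ≤ j - i + q := by
          by_contra hcon
          have := HL (j - i + q) (by omega) (by omega)
          rw [perz_eq2 _ _ _ (by omega) (by omega)] at this
          rw [show i + (j - i + q - (j - i)) = i + q by ring] at this
          exact not_both this hq2
        have hd0 : d ≠ 0 := by
          rintro rfl
          rw [sub_zero, ← he] at hc1
          exact not_both hd hc1
        have htd : j - i - d < t := by
          by_contra hcon
          have := HL (j - i - d) (by omega) (by omega)
          rw [perz_eq _ _ _ (by omega) (by omega)] at this
          rw [show i + (j - i - d) = j - d by ring] at this
          exact not_both this hc1
        apply G.rel p hp (i + t - (j - i))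
        intro k hk
        rw [← H k hk]
        by_cases hr : t + k < j - i
        · rw [perz_eq _ _ _ (by omega) (by omega)]
          have := (hc2 (j - i - (t + k)) (by omega) (by omega)).1
          rw [show i - (j - i - (t + k)) = i + t - (j - i) + k by ring] at this
          rw [this]
          congr 1; ring
        · rw [perz_eq2 _ _ _ (by omega) (by omega)]
          congr 1; ring
  · intro p hp t ht0 ht1 H
    apply G.rel' p hp (i + t)
    intro k hk
    have hk0 : (k : ℤ) ≤ t := by
      by_contra hcon
      have := H t.toNat (by omega)
      rw [perz_eq _ _ _ (by omega) (by omega),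
        show i + (t - (t.toNat : ℤ)) = i by omega] at this
      rw [this] at hd
      simp at hd
    rw [← H k hk, perz_eq _ _ _ (by omega) (by omega)]
    congr 1; ring

theorem lsrc_swap {V A : Type*} (src tgt : A → V) (x : A ⊕ A) :
    lsrc src tgt (Sum.swap x) = ltgt src tgt x := by
  cases x <;> rfl

theorem ltgt_swap {V A : Type*} (src tgt : A → V) (x : A ⊕ A) :
    ltgt src tgt (Sum.swap x) = lsrc src tgt x := by
  cases x <;> rfl

/-- Gluing one piece and the inverse of another. -/
theorem glue_good {V A : Type*} {src tgt : A → V} {ρ : Set (List A)}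
    {N : ℤ} {g : ℤ → A ⊕ A} (G : GoodSeq src tgt ρ N g) {a b a' b' : ℤ}
    (hab : a ≤ b) (hab' : a' ≤ b')
    (ha : (g a).isLeft = true) (hb : (g b).isLeft = true)
    (ha' : (g a').isLeft = true) (hb' : (g b').isLeft = true)
    (hs : lsrc src tgt (g a) = lsrc src tgt (g a'))
    (ht : ltgt src tgt (g b) = ltgt src tgt (g b'))
    (hna : g a ≠ g a') (hnb : g b ≠ g b') :
    ∃ f, GoodSeq src tgt ρ (b - a + 1 + (b' - a' + 1)) f := by
  obtain ⟨m, hm⟩ : ∃ m, m = b - a + 1 := ⟨_, rfl⟩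
  obtain ⟨m', hm'⟩ : ∃ m', m' = b' - a' + 1 := ⟨_, rfl⟩
  rw [← hm, ← hm']
  let h : ℤ → A ⊕ A := fun k => if k < m then g (a + k) else Sum.swap (g (b' - (k - m)))
  have h1 : ∀ k, k < m → h k = g (a + k) := fun k hk => if_pos hk
  have h2 : ∀ k, m ≤ k → h k = Sum.swap (g (b' - (k - m))) := fun k hk => if_neg (by omega)
  have hz : h 0 = g a := by rw [h1 _ (by omega)]; simp
  have hm1 : h (m - 1) = g b := by rw [h1 _ (by omega)]; congr 1; omega
  have hm2 : h m = Sum.swap (g b') := by rw [h2 _ (by omega)]; simp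
  have hm3 : h (m + m' - 1) = Sum.swap (g a') := by
    rw [h2 _ (by omega)]; congr 2; omega
  have hcases : ∀ k, k + 1 < m ∨ k = m - 1 ∨ m ≤ k := by intro k; omega
  refine ⟨_, perz_good (P := m + m') (h := h) (by omega) ⟨0, le_refl _, by omega, by rwa [hz]⟩
    ⟨m, by omega, by omega, by rw [hm2]; simpa using hb'⟩ ?_ ?_ ?_ ?_ ?_ ?_⟩
  · intro k h0 hk
    rcases hcases k with hlt | rfl | hge
    · rw [h1 _ (by omega), h1 _ hlt, ← add_assoc]; exact G.comp _
    · rw [hm1, sub_add_cancel, hm2, lsrc_swap, ht]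
    · rw [h2 _ hge, h2 _ (by omega), lsrc_swap, ltgt_swap]
      have := G.comp (b' - (k + 1 - m))
      rw [this]; congr 2; ring
  · rw [hz, hm3, ltgt_swap, hs]
  · intro k h0 hk
    rcases hcases k with hlt | rfl | hge
    · rw [h1 _ (by omega), h1 _ hlt, ← add_assoc]; exact G.red _
    · rw [hm1, sub_add_cancel, hm2]
      intro hh
      exact hnb (by simpa using congrArg Sum.swap hh)
    · rw [h2 _ hge, h2 _ (by omega)]
      have := G.red (b' - (k + 1 - m))
      rw [Sum.swap_swap]
      rw [show b' - (k + 1 - m) + 1 = b' - (k - m) by ring] at this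
      exact this.symm
  · rw [hz, hm3, Sum.swap_swap]; exact hna.symm
  · intro p hp t ht0 ht1 H
    have HL : ∀ r : ℤ, t ≤ r → r < t + p.length →
        (perz (m + m') h r).isLeft = true := by
      intro r h0 h1
      have := H (r - t).toNat (by omega)
      rw [show t + ((r - t).toNat : ℤ) = r by omega] at this
      rw [this]; rfl
    by_cases htm : t < m
    · have hb : t + p.length ≤ m := by
        by_contra hcon
        have := HL m (by omega) (by omega)
        rw [perz_eq _ _ _ (by omega) (by omega), hm2] at this
        exact not_both hb' (by simpa using this)
      apply G.rel p hp (a + t)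
      intro k hk
      rw [← H k hk, perz_eq _ _ _ (by omega) (by omega), h1 _ (by omega), add_assoc]
    · have hb : t + p.length ≤ m + m' := by
        by_contra hcon
        have := HL (m + m' - 1) (by omega) (by omega)
        rw [perz_eq _ _ _ (by omega) (by omega), hm3] at this
        exact not_both ha' (by simpa using this)
      apply G.rel' p hp (b' - (t - m))
      intro k hk
      have := H k hk
      rw [perz_eq _ _ _ (by omega) (by omega), h2 _ (by omega)] at this
      have := congrArg Sum.swap this
      rw [Sum.swap_swap] at this
      rw [show b' - (t - m) - (k : ℤ) = b' - (t + k - m) by ring, this]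
      rfl
  · intro p hp t ht0 ht1 H
    have HL : ∀ r : ℤ, r ≤ t → t - p.length < r →
        (perz (m + m') h r).isRight = true := by
      intro r h0 h1
      have := H (t - r).toNat (by omega)
      rw [show t - ((t - r).toNat : ℤ) = r by omega] at this
      rw [this]; rfl
    by_cases htm : t < m
    · have hb : (p.length : ℤ) ≤ t := by
        by_contra hcon
        have := HL 0 (by omega) (by omega)
        rw [perz_eq _ _ _ (by omega) (by omega), hz] at this
        exact not_both ha this
      apply G.rel' p hp (a + t)
      intro k hk
      rw [← H k hk, perz_eq _ _ _ (by omega) (by omega), h1 _ (by omega)]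
      congr 1; ring
    · have hb : m ≤ t - p.length + 1 := by
        by_contra hcon
        have := HL (m - 1) (by omega) (by omega)
        rw [perz_eq _ _ _ (by omega) (by omega), hm1] at this
        exact not_both hb this
      apply G.rel p hp (b' - (t - m))
      intro k hk
      have := H k hk
      rw [perz_eq _ _ _ (by omega) (by omega), h2 _ (by omega)] at this
      have := congrArg Sum.swap this
      rw [Sum.swap_swap] at this
      rw [show b' - (t - m) + (k : ℤ) = b' - (t - k - m) by ring, this]
      rfl

/-- The doubly diverging case. -/
theorem diverge_good {V A : Type*} {src tgt : A → V} {ρ : Set (List A)}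
    {N : ℤ} {g : ℤ → A ⊕ A} (G : GoodSeq src tgt ρ N g) {i j c d : ℤ} (hij : i < j)
    (hc : 0 < c) (hd : 0 < d)
    (hr : ∀ k, 0 ≤ k → k < c → g (i + k) = g (j + k))
    (hl : ∀ k, 0 ≤ k → k < d → g (i - k) = g (j - k))
    (h1 : (g (i + c)).isLeft = true) (h2 : (g (j + c)).isLeft = true)
    (h3 : (g (i - d)).isLeft = true) (h4 : (g (j - d)).isLeft = true)
    (hn : g (i + c) ≠ g (j + c)) (hn' : g (i - d) ≠ g (j - d))
    (hv : j + c ≤ i + N - d) :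
    ∃ M f, M < N ∧ GoodSeq src tgt ρ M f := by
  have hper : g (i + N - d) = g (i - d) := by
    rw [show i + N - d = (i - d) + N by ring, G.per]
  have hs : lsrc src tgt (g (i + c)) = lsrc src tgt (g (j + c)) := by
    have e1 := G.comp (i + (c - 1))
    have e2 := G.comp (j + (c - 1))
    rw [hr (c - 1) (by omega) (by omega), e2] at e1
    rw [show j + (c - 1) + 1 = j + c by ring, show i + (c - 1) + 1 = i + c by ring] at e1
    exact e1.symm
  have ht : ltgt src tgt (g (j - d)) = ltgt src tgt (g (i - d)) := by
    have e1 := G.comp (i - d)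
    have e2 := G.comp (j - d)
    have e3 := hl (d - 1) (by omega) (by omega)
    rw [show i - (d - 1) = i - d + 1 by ring, show j - (d - 1) = j - d + 1 by ring] at e3
    rw [e1, e2, e3]
  -- choice of the end of the first piece
  have hb : ∃ b, i + c ≤ b ∧ b - (i + c) + 1 ≤ j - i ∧ g b = g (j - d) := by
    by_cases hnd : i + c ≤ j - d
    · exact ⟨j - d, hnd, by omega, rfl⟩
    · have hpos : 0 < j - i := by omega
      have hstep : ∀ s : ℕ, j - d + (j - i) * s ≤ j + c - 1 →
          g (j - d + (j - i) * s) = g (j - d) := by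
        intro s
        induction s with
        | zero => intro _; simp
        | succ s ih =>
          intro hs
          push_cast at hs ⊢
          have hs' : j - d + (j - i) * s ≤ i + c - 1 := by linarith
          have hnn : 0 ≤ (j - i) * (s : ℤ) := by positivity
          rw [← ih (by omega)]
          obtain ⟨x, hx⟩ : ∃ x, x = j - d + (j - i) * (s : ℤ) := ⟨_, rfl⟩
          rw [show j - d + (j - i) * ((s : ℤ) + 1) = x + (j - i) by rw [hx]; ring, ← hx]
          rw [← hx] at hs'
          have hx1 : i - d < x := by omega
          by_cases hxi : i ≤ x
          · have := hr (x - i) (by omega) (by omega)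
            rw [show i + (x - i) = x by ring] at this
            rw [this]; congr 1; ring
          · have := hl (i - x) (by omega) (by omega)
            rw [show i - (i - x) = x by ring] at this
            rw [this]; congr 1; ring
      obtain ⟨z, hz⟩ : ∃ z, z = i + c - 1 - (j - d) := ⟨_, rfl⟩
      have hz0 : 0 ≤ z := by omega
      have e1 := Int.emod_add_mul_ediv z (j - i)
      have e2 := Int.emod_nonneg z hpos.ne'
      have e3 := Int.emod_lt_of_pos z hpos
      have e4 : 0 ≤ z / (j - i) := Int.ediv_nonneg hz0 hpos.le
      have e5 : (j - i) * (((z / (j - i)).toNat + 1 : ℕ) : ℤ)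
          = (j - i) * (z / (j - i)) + (j - i) := by
        push_cast
        rw [Int.toNat_of_nonneg e4]; ring
      refine ⟨j - d + (j - i) * (((z / (j - i)).toNat + 1 : ℕ) : ℤ), ?_, ?_, hstep _ ?_⟩
      · rw [e5]; omega
      · rw [e5]; omega
      · rw [e5]; omega
  obtain ⟨b, hb1, hb2, hb3⟩ := hb
  obtain ⟨f, hf⟩ := glue_good G hb1 hv h1 (by rwa [hb3]) h2 (by rwa [hper]) hs
    (by rw [hb3, hper, ht]) hn (by rw [hb3, hper]; exact hn'.symm)
  exact ⟨_, f, by omega, hf⟩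

theorem exists_right {V A : Type*} {src tgt : A → V} {ρ : Set (List A)}
    {N : ℤ} {g : ℤ → A ⊕ A} (G : GoodSeq src tgt ρ N g) :
    ∃ q, (g q).isRight = true := G.inv

theorem per_mul {V A : Type*} {src tgt : A → V} {ρ : Set (List A)}
    {N : ℤ} {g : ℤ → A ⊕ A} (G : GoodSeq src tgt ρ N g) (k m : ℤ) : g (k + m * N) = g k := by
  have : Function.Periodic g N := G.per
  simpa using this.int_mul m k

theorem per_mod {V A : Type*} {src tgt : A → V} {ρ : Set (List A)}
    {N : ℤ} {g : ℤ → A ⊕ A} (G : GoodSeq src tgt ρ N g) (i q : ℤ) :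
    g (i + (q - i) % N) = g q := by
  rw [← per_mul G _ ((q - i) / N)]
  congr 1
  have := Int.emod_add_mul_ediv (q - i) N
  linarith

/-- Any minimal good sequence has no repeated direct letter in a period. -/
theorem core {V A : Type*} {src tgt : A → V} {ρ : Set (List A)}
    {N : ℤ} {g : ℤ → A ⊕ A} (G : GoodSeq src tgt ρ N g)
    (hmin : ∀ M f, GoodSeq src tgt ρ M f → N ≤ M) {i j : ℤ} (hij : i < j) (hjN : j < i + N)
    (hd : (g i).isLeft = true) (he : g i = g j) : False := by
  classical
  have hN := G.pos
  obtain ⟨q, hq⟩ := G.inv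
  have hexc : ∃ c : ℕ, ¬ (g (i + c) = g (j + c) ∧ (g (i + c)).isLeft = true) := by
    refine ⟨((q - i) % N).toNat, ?_⟩
    rintro ⟨_, h⟩
    rw [Int.toNat_of_nonneg (Int.emod_nonneg _ hN.ne'), per_mod G] at h
    exact not_both h hq
  have hexd : ∃ d : ℕ, ¬ (g (i - d) = g (j - d) ∧ (g (i - d)).isLeft = true) := by
    refine ⟨((i - q) % N).toNat, ?_⟩
    rintro ⟨_, h⟩
    rw [Int.toNat_of_nonneg (Int.emod_nonneg _ hN.ne')] at h
    have : g (i - (i - q) % N) = g q := by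
      rw [← per_mul G _ (-((i - q) / N))]
      congr 1
      have := Int.emod_add_mul_ediv (i - q) N
      linarith
    rw [this] at h
    exact not_both h hq
  obtain ⟨c, hc1, hc2⟩ : ∃ c : ℤ, ¬ (g (i + c) = g (j + c) ∧ (g (i + c)).isLeft = true) ∧
      (0 ≤ c ∧ ∀ k, 0 ≤ k → k < c → g (i + k) = g (j + k) ∧ (g (i + k)).isLeft = true) := by
    refine ⟨(Nat.find hexc : ℕ), Nat.find_spec hexc, by omega, ?_⟩
    intro k h0 hk
    have := Nat.find_min hexc (m := k.toNat) (by omega)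
    rw [Int.toNat_of_nonneg h0, not_not] at this
    exact this
  obtain ⟨d, hd1, hd2⟩ : ∃ d : ℤ, ¬ (g (i - d) = g (j - d) ∧ (g (i - d)).isLeft = true) ∧
      (0 ≤ d ∧ ∀ k, 0 ≤ k → k < d → g (i - k) = g (j - k) ∧ (g (i - k)).isLeft = true) := by
    refine ⟨(Nat.find hexd : ℕ), Nat.find_spec hexd, by omega, ?_⟩
    intro k h0 hk
    have := Nat.find_min hexd (m := k.toNat) (by omega)
    rw [Int.toNat_of_nonneg h0, not_not] at this
    exact this
  obtain ⟨hc0, hc2⟩ := hc2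
  obtain ⟨hd0, hd2⟩ := hd2
  have hcne : c ≠ 0 := by
    rintro rfl
    exact hc1 (by simpa using ⟨he, hd⟩)
  have hdne : d ≠ 0 := by
    rintro rfl
    exact hd1 (by simpa using ⟨he, hd⟩)
  have pA : ∀ k, g (i + N + k) = g (i + k) := fun k => by
    rw [show i + N + k = i + k + N by ring, G.per]
  have pS : ∀ k, g (i + N - k) = g (i - k) := fun k => by
    rw [show i + N - k = i - k + N by ring, G.per]
  have LR : ∀ x : A ⊕ A, x.isLeft = true ∨ x.isRight = true := by intro x; cases x <;> simp
  rcases LR (g (i + c)) with r1 | r1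
  swap
  · have := hmin _ _ (splice_good G hij hd he (Or.inl ⟨c, hc0, r1, hc2⟩))
    omega
  rcases LR (g (j - d)) with r2 | r2
  swap
  · have := hmin _ _ (splice_good G hij hd he (Or.inr ⟨d, hd0, r2, hd2⟩))
    omega
  have hd' : (g j).isLeft = true := by rwa [← he]
  have he' : g j = g (i + N) := by rw [G.per, he]
  rcases LR (g (j + c)) with r3 | r3
  swap
  · have := hmin _ _ (splice_good G hjN hd' he' (Or.inl ⟨c, hc0, r3, by
      intro k h0 hk
      rw [pA, ← (hc2 k h0 hk).1]
      exact ⟨rfl, (hc2 k h0 hk).2⟩⟩))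
    omega
  rcases LR (g (i - d)) with r4 | r4
  swap
  · have := hmin _ _ (splice_good G hjN hd' he' (Or.inr ⟨d, hd0, by rwa [pS], by
      intro k h0 hk
      rw [pS, ← (hd2 k h0 hk).1]
      exact ⟨rfl, (hd2 k h0 hk).2⟩⟩))
    omega
  have hn : g (i + c) ≠ g (j + c) := fun h => hc1 ⟨h, r1⟩
  have hn' : g (i - d) ≠ g (j - d) := fun h => hd1 ⟨h, r4⟩
  by_cases hv : j + c ≤ i + N - d
  · obtain ⟨M, f, hM, hf⟩ := diverge_good G hij (by omega) (by omega)
      (fun k h0 hk => (hc2 k h0 hk).1) (fun k h0 hk => (hd2 k h0 hk).1) r1 r3 r4 r2 hn hn' hv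
    have := hmin _ _ hf
    omega
  by_cases hu : i + c ≤ j - d
  · obtain ⟨M, f, hM, hf⟩ := diverge_good (i := j) (j := i + N) (c := c) (d := d) G hjN
      (by omega) (by omega)
      (fun k h0 hk => by rw [pA, (hc2 k h0 hk).1]) (fun k h0 hk => by rw [pS, (hd2 k h0 hk).1])
      r3 (by rwa [pA]) r2 (by rwa [pS]) (by rw [pA]; exact hn.symm) (by rw [pS]; exact hn'.symm)
      (by omega)
    have := hmin _ _ hf
    omega
  -- everything is direct
  have h0 := Int.emod_nonneg (q - i) hN.ne'
  have h1 := Int.emod_lt_of_pos (q - i) hN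
  have hx := per_mod G i q
  obtain ⟨x, hxx⟩ : ∃ x, x = (q - i) % N := ⟨_, rfl⟩
  rw [← hxx] at h0 h1 hx
  rw [← hx] at hq
  refine not_both ?_ hq
  by_cases c1 : x < c
  · exact (hc2 x h0 c1).2
  by_cases c2 : i + x < j
  · have := hd2 (j - (i + x)) (by omega) (by omega)
    rw [show j - (j - (i + x)) = i + x by ring] at this
    rw [← this.1]; exact this.2
  by_cases c3 : i + x < j + c
  · have := hc2 (i + x - j) (by omega) (by omega)
    rw [show j + (i + x - j) = i + x by ring] at this
    rw [← this.1]; exact this.2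
  · have := hd2 (N - x) (by omega) (by omega)
    rw [show i - (N - x) = i + x - N by ring] at this
    have e := G.per (i + x - N)
    rw [sub_add_cancel] at e
    rw [e]; exact this.2

theorem good_inv {V A : Type*} {src tgt : A → V} {ρ : Set (List A)}
    {N : ℤ} {g : ℤ → A ⊕ A} (G : GoodSeq src tgt ρ N g) :
    GoodSeq src tgt ρ N (fun k => Sum.swap (g (-k))) where
  pos := G.pos
  per := by
    intro k
    have := G.per (-(k + N))
    rw [show -(k + N) + N = -k by ring] at this
    simp only [this]
  dir := by
    obtain ⟨k, hk⟩ := G.inv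
    exact ⟨-k, by simpa using hk⟩
  inv := by
    obtain ⟨k, hk⟩ := G.dir
    exact ⟨-k, by simpa using hk⟩
  comp := by
    intro k
    rw [lsrc_swap, ltgt_swap, G.comp]
    congr 2; ring
  red := by
    intro k
    have := G.red (-(k + 1))
    rw [show -(k + 1) + 1 = -k by ring] at this
    rw [Sum.swap_swap]
    exact this.symm
  rel := by
    intro p hp t H
    apply G.rel' p hp (-t)
    intro k hk
    have := congrArg Sum.swap (H k hk)
    rw [Sum.swap_swap] at this
    rw [show -t - (k : ℤ) = -(t + k) by ring, this]; rfl
  rel' := by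
    intro p hp t H
    apply G.rel p hp (-t)
    intro k hk
    have := congrArg Sum.swap (H k hk)
    rw [Sum.swap_swap] at this
    rw [show -t + (k : ℤ) = -(t - k) by ring, this]; rfl

theorem isWord_of_good {V A : Type*} {src tgt : A → V} {ρ : Set (List A)}
    {N : ℤ} {g : ℤ → A ⊕ A} (G : GoodSeq src tgt ρ N g) (x : List (A ⊕ A))
    (hx : ∀ (k : ℕ) (h : k < x.length), x[k] = g k) : IsWord src tgt ρ x := by
  refine ⟨?_, ?_, ?_, ?_⟩
  · refine List.isChain_iff_getElem.2 ?_
    intro k hk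
    rw [hx, hx]
    exact_mod_cast G.comp k
  · refine List.isChain_iff_getElem.2 ?_
    intro k hk
    rw [hx, hx]
    exact_mod_cast G.red k
  · intro p hp H
    obtain ⟨t, h1, h2⟩ := List.infix_iff_getElem?.1 H
    rw [List.length_map] at h1
    apply G.rel p hp t
    intro k hk
    have := h2 k (by simpa using hk)
    rw [List.getElem?_eq_getElem (by omega), Option.some_inj, hx, List.getElem_map] at this
    rw [← this]; congr 1; push_cast; ring
  · intro p hp H
    obtain ⟨t, h1, h2⟩ := List.infix_iff_getElem?.1 H
    have hl : (winv x).length = x.length := by simp [winv]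
    rw [List.length_map] at h1
    apply G.rel' p hp ((x.length : ℤ) - 1 - t)
    intro k hk
    have := h2 k (by simpa using hk)
    rw [List.getElem?_eq_getElem (by omega), Option.some_inj, List.getElem_map] at this
    simp only [winv, List.getElem_reverse, List.getElem_map, List.length_map] at this
    rw [hx] at this
    have := congrArg Sum.swap this
    rw [Sum.swap_swap, Sum.swap_inl] at this
    rw [← this]; congr 1; omega

theorem list_of_good {V A : Type*} {src tgt : A → V} {ρ : Set (List A)}
    {N : ℤ} {g : ℤ → A ⊕ A} (G : GoodSeq src tgt ρ N g) :
    ∃ x : List (A ⊕ A), IsCyclicWord src tgt ρ x ∧ (x.length : ℤ) = N := by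
  have hN := G.pos
  have key : ∀ q, g q ∈ List.ofFn (fun k : Fin N.toNat => g (k : ℕ)) := by
    intro q
    rw [List.mem_ofFn]
    have h0 := Int.emod_nonneg q hN.ne'
    have h1 := Int.emod_lt_of_pos q hN
    refine ⟨⟨(q % N).toNat, by omega⟩, ?_⟩
    have := per_mod G 0 q
    simp only [sub_zero, zero_add] at this
    simp only [Int.toNat_of_nonneg h0, this]
  refine ⟨List.ofFn (fun k : Fin N.toNat => g (k : ℕ)), ⟨?_, ?_, ?_⟩, ?_⟩
  · obtain ⟨q, hq⟩ := G.dir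
    exact ⟨_, key q, hq⟩
  · obtain ⟨q, hq⟩ := G.inv
    exact ⟨_, key q, hq⟩
  · apply isWord_of_good G
    intro k hk
    rw [List.getElem_append]
    split_ifs with h
    · simp
    · simp only [List.length_ofFn] at h
      simp only [List.getElem_ofFn, List.length_ofFn]
      rw [← G.per]
      congr 1; omega
  · simp; omega

theorem good_of_list {V A : Type*} {src tgt : A → V} {ρ : Set (List A)}
    {w : List (A ⊕ A)} (hw : IsCyclicWord src tgt ρ w) :
    ∃ g, GoodSeq src tgt ρ (w.length : ℤ) g ∧
      ∀ (k : ℕ) (h : k < w.length), g k = w[k] := by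
  obtain ⟨⟨l, hl, hl'⟩, ⟨r, hr, hr'⟩, h1, h2, h3, h4⟩ := hw
  obtain ⟨a, ha, hal⟩ := List.getElem_of_mem hl
  obtain ⟨b, hb, hbr⟩ := List.getElem_of_mem hr
  obtain ⟨h, hh⟩ : ∃ h : ℤ → A ⊕ A, h = fun k => w.getD k.toNat l := ⟨_, rfl⟩
  have hk : ∀ (k : ℕ) (hk : k < w.length), h k = w[k] := by
    intro k hk
    simp [hh, hk]
  have hx : ∀ (k : ℕ) (hk : k < (w ++ w).length), (w ++ w)[k] = perz w.length h k := by
    intro k hk'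
    rw [List.length_append] at hk'
    rw [List.getElem_append]
    split_ifs with hlt
    · rw [perz_eq _ _ _ (by omega) (by omega), hk _ hlt]
    · rw [perz_eq2 _ _ _ (by omega) (by omega), ← hk _ (by omega)]
      congr 1; omega
  have hlen : (w ++ w).length = w.length + w.length := List.length_append
  have c1 := List.isChain_iff_getElem.1 h1
  have c2 := List.isChain_iff_getElem.1 h2
  have d1 : ∀ k : ℕ, k + 1 < w.length + w.length →
      ltgt src tgt (perz w.length h k) = lsrc src tgt (perz w.length h (k + 1)) := by
    intro k hk
    have := c1 k (by omega)
    rw [hx, hx] at this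
    exact_mod_cast this
  have d2 : ∀ k : ℕ, k + 1 < w.length + w.length →
      Sum.swap (perz w.length h k) ≠ perz w.length h (k + 1) := by
    intro k hk
    have := c2 k (by omega)
    rw [hx, hx] at this
    exact_mod_cast this
  refine ⟨perz w.length h, perz_good (by omega)
    ⟨a, by omega, by omega, by rw [hk a ha, hal]; exact hl'⟩
    ⟨b, by omega, by omega, by rw [hk b hb, hbr]; exact hr'⟩ ?_ ?_ ?_ ?_ ?_ ?_, ?_⟩
  · intro k h0 hk
    have := d1 k.toNat (by omega)
    rwa [Int.toNat_of_nonneg h0, perz_eq _ _ _ (by omega) (by omega),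
      perz_eq _ _ _ (by omega) (by omega)] at this
  · have := d1 (w.length - 1) (by omega)
    rw [show ((w.length - 1 : ℕ) : ℤ) = w.length - 1 by omega,
      perz_eq _ _ _ (by omega) (by omega), perz_eq2 _ _ _ (by omega) (by omega)] at this
    simpa using this
  · intro k h0 hk
    have := d2 k.toNat (by omega)
    rwa [Int.toNat_of_nonneg h0, perz_eq _ _ _ (by omega) (by omega),
      perz_eq _ _ _ (by omega) (by omega)] at this
  · have := d2 (w.length - 1) (by omega)
    rw [show ((w.length - 1 : ℕ) : ℤ) = w.length - 1 by omega,
      perz_eq _ _ _ (by omega) (by omega), perz_eq2 _ _ _ (by omega) (by omega)] at this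
    simpa using this
  · intro p hp t ht0 ht1 H
    apply h3 p hp
    rw [List.infix_iff_getElem?]
    have hb : t + p.length ≤ 2 * w.length := by
      by_contra hcon
      have := H (w.length + b - t).toNat (by omega)
      rw [show t + ((w.length + b - t).toNat : ℤ) = w.length + b by omega,
        perz_eq2 _ _ _ (by omega) (by omega), add_sub_cancel_left, hk b hb, hbr] at this
      rw [this] at hr'
      simp at hr'
    refine ⟨t.toNat, by rw [List.length_map]; omega, ?_⟩
    intro k hk
    rw [List.length_map] at hk
    rw [List.getElem?_eq_getElem (by omega), hx, List.getElem_map, ← H k hk]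
    congr 2; omega
  · intro p hp t ht0 ht1 H
    apply h4 p hp
    rw [List.infix_iff_getElem?]
    have hwl : (winv (w ++ w)).length = w.length + w.length := by simp [winv]
    have hb : (p.length : ℤ) ≤ t + w.length + 1 := by
      by_contra hcon
      have := H (t + w.length - a).toNat (by omega)
      rw [← perz_add, show t - ((t + w.length - a).toNat : ℤ) + w.length = a by omega,
        perz_eq _ _ _ (by omega) (by omega), hk a ha, hal] at this
      rw [this] at hl'
      simp at hl'
    refine ⟨(w.length - 1 - t).toNat, by rw [List.length_map]; omega, ?_⟩
    intro k hk
    rw [List.length_map] at hk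
    rw [List.getElem?_eq_getElem (by omega)]
    simp only [winv, List.getElem_reverse, List.getElem_map, List.length_map]
    rw [hx]
    have := congrArg Sum.swap (H k hk)
    rw [Sum.swap_inr] at this
    rw [← this, ← perz_add _ _ (t - (k : ℤ))]
    refine congrArg (fun z => some (Sum.swap (perz _ h z))) ?_
    rw [hlen]; omega
  · intro k h'
    rw [perz_eq _ _ _ (by omega) (by omega), hk]

theorem nodup_of_min {V A : Type*} {src tgt : A → V} {ρ : Set (List A)}
    {w : List (A ⊕ A)} (hw : IsCyclicWord src tgt ρ w)
    (hmin : ∀ w' : List (A ⊕ A), IsCyclicWord src tgt ρ w' →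
      w.length ≤ w'.length) : w.Nodup := by
  obtain ⟨g, G, hg⟩ := good_of_list hw
  have hm : ∀ M f, GoodSeq src tgt ρ M f → (w.length : ℤ) ≤ M := by
    intro M f F
    obtain ⟨x, hx, hxl⟩ := list_of_good F
    have := hmin x hx
    omega
  rw [List.nodup_iff_pairwise_ne, List.pairwise_iff_getElem]
  intro i j hi hj hij he
  rw [← hg i hi, ← hg j hj] at he
  by_cases hl : (g i).isLeft = true
  · exact core G hm (i := i) (j := j) (by omega) (by omega) hl he
  · refine core (good_inv G) hm (i := -j) (j := -i) (by omega) (by omega) ?_ ?_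
    · simp only [neg_neg]
      rw [← he]
      simpa using hl
    · simp only [neg_neg, he]

/-- If `w` is a cyclic word of minimal length, then every arrow occurs at most
once as a direct letter of `w` and at most once as an inverse letter of `w`;
in particular the length of `w` is at most `2a` where `a` is the number of
arrows. -/
theorem minimal_cyclic_word_bound {V A : Type*} [DecidableEq A] [Fintype A]
    (src tgt : A → V) (ρ : Set (List A))
    (hρ : ∀ p ∈ ρ, 2 ≤ p.length ∧ List.Chain' (fun a b => tgt a = src b) p)
    (w : List (A ⊕ A)) (hw : IsCyclicWord src tgt ρ w)
    (hmin : ∀ w' : List (A ⊕ A), IsCyclicWord src tgt ρ w' →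
      w.length ≤ w'.length) :
    (∀ a : A, w.count (Sum.inl a) ≤ 1 ∧ w.count (Sum.inr a) ≤ 1) ∧
    w.length ≤ 2 * Fintype.card A := by
  have hnd := nodup_of_min hw hmin
  have hlaw : LawfulBEq (A ⊕ A) :=
    { eq_of_beq := by
        intro x y h
        rcases x with x | x <;> rcases y with y | y
        · exact congrArg Sum.inl (eq_of_beq (show (x == y) = true from h))
        · exact absurd (show false = true from h) (by simp)
        · exact absurd (show false = true from h) (by simp)
        · exact congrArg Sum.inr (eq_of_beq (show (x == y) = true from h))
      rfl := by
        intro x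
        rcases x with x | x
        · exact show (x == x) = true from beq_self_eq_true x
        · exact show (x == x) = true from beq_self_eq_true x }
  refine ⟨fun a => ⟨List.nodup_iff_count_le_one.1 hnd _, List.nodup_iff_count_le_one.1 hnd _⟩, ?_⟩
  have := hnd.length_le_card
  rw [Fintype.card_sum] at this
  omega
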